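/- For all μ ∈ [0, 1), [1 − μ − 2μ² + μ³ + μ⁴] · exp(μ/(1 − μ²)) − [1 + μ − 2μ² − μ³ + μ⁴] · exp(−μ/(1 − μ²)) ≤ 0. -/

import Mathlib

/-!
With `d = 1 - μ ^ 2` the two polynomials factor as `d * (d - μ)` and `d * (d + μ)`. Dividing by
`d ^ 2` and putting `t = μ / d` turns the claim into `(1 - t) * exp t ≤ (1 + t) * exp (-t)`, that
is, `sinh t ≤ t * cosh t`. For `t ≥ 0` this is the mean value inequality for `sinh` on `[0, t]`,
because the derivative `cosh` is at most `cosh t` there.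
-/

open Real Set

theorem sinh_le_self_mul_cosh {t : ℝ} (ht : 0 ≤ t) : sinh t ≤ t * cosh t := by
  have deriv_le : ∀ s ∈ interior (Icc 0 t), deriv sinh s ≤ cosh t := by
    intro s hs
    have hs' : s ∈ Icc 0 t := interior_subset hs
    rw [Real.deriv_sinh, cosh_le_cosh, abs_of_nonneg hs'.1, abs_of_nonneg ht]
    exact hs'.2
  have mean_value : sinh t - sinh 0 ≤ cosh t * (t - 0) :=
    (convex_Icc 0 t).image_sub_le_mul_sub_of_deriv_le continuous_sinh.continuousOn
      differentiable_sinh.differentiableOn deriv_le 0 (left_mem_Icc.2 ht) t (right_mem_Icc.2 ht) ht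
  simpa only [sinh_zero, sub_zero, mul_comm] using mean_value

theorem one_sub_mul_exp_le_one_add_mul_exp_neg {t : ℝ} (ht : 0 ≤ t) :
    (1 - t) * exp t ≤ (1 + t) * exp (-t) := by
  rw [← cosh_add_sinh, ← cosh_sub_sinh]
  linear_combination 2 * sinh_le_self_mul_cosh ht

theorem boundary_inequality_first_level_general {x d : ℝ} (hd : d ≠ 0) (hxd : 0 ≤ x / d) :
    d * (d - x) * exp (x / d) - d * (d + x) * exp (-x / d) ≤ 0 := by
  have sub_factor : d * (d - x) = d ^ 2 * (1 - x / d) := by field_simp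
  have add_factor : d * (d + x) = d ^ 2 * (1 + x / d) := by field_simp
  rw [sub_nonpos, neg_div, sub_factor, add_factor, mul_assoc, mul_assoc]
  exact mul_le_mul_of_nonneg_left (one_sub_mul_exp_le_one_add_mul_exp_neg hxd) (sq_nonneg d)

theorem boundary_inequality_first_level (μ : ℝ) (hμ0 : 0 ≤ μ) (hμ1 : μ < 1) :
    (1 - μ - 2*μ^2 + μ^3 + μ^4) * Real.exp (μ/(1 - μ^2))
      - (1 + μ - 2*μ^2 - μ^3 + μ^4) * Real.exp (-μ/(1 - μ^2)) ≤ 0 := by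
  have hd : 0 < 1 - μ ^ 2 := by nlinarith
  have sub_factor : 1 - μ - 2*μ^2 + μ^3 + μ^4 = (1 - μ ^ 2) * (1 - μ ^ 2 - μ) := by ring
  have add_factor : 1 + μ - 2*μ^2 - μ^3 + μ^4 = (1 - μ ^ 2) * (1 - μ ^ 2 + μ) := by ring
  rw [sub_factor, add_factor]
  exact boundary_inequality_first_level_general hd.ne' (div_nonneg hμ0 hd.le)
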